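/- Let G be a strongly connected directed graph on n vertices with self-loops at every vertex, F_q a finite field with q ≥ (n³+n)/2, with entries of A on edges and entries of x iid uniform over F_q. Then the probability that the Hankel matrices H_n^{(r)} are simultaneously invertible for all r = 1,…,n is at least 1 − (n³+n)/(2q). -/

import Mathlib

open Matrix

/-- The matrix built from a weight assignment `w` on the edges of the graph `E`
(`E v u` meaning there is an edge from `v` to `u`): the entry `A u v` is the weight
of the edge `(v, u)` if it exists, and `0` otherwise. -/
def graphMat {n : ℕ} {F : Type*} [Field F] (E : Fin n → Fin n → Prop) [DecidableRel E]
    (w : {p : Fin n × Fin n // E p.1 p.2} → F) : Matrix (Fin n) (Fin n) F :=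
  Matrix.of fun u v => if h : E v u then w ⟨(v, u), h⟩ else 0

section Tree

variable {V : Type*}

/-- There is a walk of length `k` along `E` from a vertex to `r`. -/
def StepsTo (E : V → V → Prop) (r : V) : ℕ → V → Prop
  | 0, v => v = r
  | k + 1, v => ∃ u, E v u ∧ StepsTo E r k u

/-- If every vertex reaches `r`, there is a parent map along edges which strictly decreases
a depth function away from `r`. -/
theorem exists_parent_depth (E : V → V → Prop) (r : V)
    (h : ∀ v, Relation.ReflTransGen E v r) :
    ∃ (p : V → V) (depth : V → ℕ),
      p r = r ∧ ∀ v, v ≠ r → E v (p v) ∧ depth (p v) < depth v := by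
  classical
  have hD : ∀ v, ∃ k, StepsTo E r k v := by
    intro v
    induction h v using Relation.ReflTransGen.head_induction_on with
    | refl => exact ⟨0, rfl⟩
    | head hE _ ih =>
      obtain ⟨k, hk⟩ := ih
      exact ⟨k + 1, _, hE, hk⟩
  have key : ∀ v : V, ∃ u : V, (v = r → u = r) ∧
      (v ≠ r → E v u ∧ Nat.find (hD u) < Nat.find (hD v)) := by
    intro v
    by_cases hv : v = r
    · exact ⟨v, id, fun h => absurd hv h⟩
    · have hs := Nat.find_spec (hD v)
      rcases hk : Nat.find (hD v) with _ | k
      · rw [hk] at hs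
        exact absurd hs hv
      · rw [hk] at hs
        obtain ⟨u, hE, hu⟩ := hs
        exact ⟨u, fun h => absurd h hv, fun _ =>
          ⟨hE, Nat.lt_succ_of_le (Nat.find_min' (hD u) hu)⟩⟩
  choose p hp using key
  exact ⟨p, fun v => Nat.find (hD v), (hp r).1 rfl, fun v => (hp v).2⟩

variable [DecidableEq V] {K : Type*} [Field K]

/-- The weighted adjacency matrix of the tree with parent map `p` and root `r`, with weight `1`
on each edge from a vertex to its parent and weights `d` on the self-loops. -/
def treeMat (p : V → V) (r : V) (d : V → K) : Matrix V V K :=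
  Matrix.of fun u v => (if u = v then d v else 0) + if v ≠ r ∧ p v = u then 1 else 0

variable [Fintype V]

theorem treeMat_mulVec (p : V → V) (r : V) (d w : V → K) (u : V) :
    (treeMat p r d *ᵥ w) u = d u * w u + ∑ v with v ≠ r ∧ p v = u, w v := by
  simp [treeMat, mulVec, dotProduct, add_mul, Finset.sum_add_distrib, Finset.sum_filter]

/-- An eigenvector of a tree matrix with distinct loop weights vanishing at the root is zero. -/
theorem treeMat_eigenvector_eq_zero {p : V → V} {r : V} {depth : V → ℕ} (hpr : p r = r)
    (hp : ∀ v, v ≠ r → depth (p v) < depth v) {d : V → K} (hd : Function.Injective d)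
    {w : V → K} {μ : K} (hw : treeMat p r d *ᵥ w = μ • w) (hr : w r = 0) : w = 0 := by
  have heq : ∀ u, d u * w u + ∑ v with v ≠ r ∧ p v = u, w v = μ * w u := fun u => by
    rw [← treeMat_mulVec, hw, Pi.smul_apply, smul_eq_mul]
  -- A vertex with `w v ≠ 0` has a descendant whose loop weight is the eigenvalue.
  have hanc : ∀ m v, Finset.univ.sup depth - depth v = m → w v ≠ 0 →
      ∃ x k, d x = μ ∧ p^[k] x = v := by
    intro m
    induction m using Nat.strong_induction_on with
    | _ m ih =>
      intro v hm hv
      by_cases hdv : d v = μ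
      · exact ⟨v, 0, hdv, rfl⟩
      · have hsum : ∑ c with c ≠ r ∧ p c = v, w c ≠ 0 := by
          intro h0
          have := heq v
          rw [h0, add_zero] at this
          exact hdv (mul_right_cancel₀ hv this)
        obtain ⟨c, hc, hwc⟩ := Finset.exists_ne_zero_of_sum_ne_zero hsum
        simp only [Finset.mem_filter, Finset.mem_univ, true_and] at hc
        have hlt := hp c hc.1
        rw [hc.2] at hlt
        have hle : depth c ≤ Finset.univ.sup depth := Finset.le_sup (Finset.mem_univ c)
        obtain ⟨x, k, hx, hk⟩ := ih _ (by omega) c rfl hwc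
        exact ⟨x, k + 1, hx, by rw [Function.iterate_succ_apply', hk, hc.2]⟩
  have hiter : ∀ j v, depth (p^[j] v) ≤ depth v := by
    intro j
    induction j with
    | zero => exact fun v => le_rfl
    | succ j ih =>
      intro v
      refine (ih (p v)).trans ?_
      by_cases hv : v = r
      · rw [hv, hpr]
      · exact (hp v hv).le
  have hmin : ∀ m v, depth v = m → w v = 0 := by
    intro m
    induction m using Nat.strong_induction_on with
    | _ m ih =>
      intro v hm
      by_contra hv
      have hvr : v ≠ r := by rintro rfl; exact hv hr
      have hpv : w (p v) = 0 := ih _ (hm ▸ hp v hvr) _ rfl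
      have hsum := heq (p v)
      rw [hpv, mul_zero, mul_zero, zero_add] at hsum
      obtain ⟨c, hc, hcv, hwc⟩ : ∃ c, (c ≠ r ∧ p c = p v) ∧ c ≠ v ∧ w c ≠ 0 := by
        by_contra! hno
        rw [Finset.sum_eq_single v] at hsum
        · exact hv hsum
        · intro b hb hbv
          simp only [Finset.mem_filter, Finset.mem_univ, true_and] at hb
          exact hno b hb hbv
        · simp [hvr]
      obtain ⟨x, k, hx, hk⟩ := hanc _ v rfl hv
      obtain ⟨y, l, hy, hl⟩ := hanc _ c rfl hwc
      obtain rfl : x = y := hd (hx.trans hy.symm)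
      have hsib : ∀ a b j, p a = p b → b ≠ r → p^[j + 1] a ≠ b := by
        intro a b j hab hb hj
        rw [Function.iterate_succ_apply, hab] at hj
        have := hiter j (p b)
        rw [hj] at this
        exact (hp b hb).not_ge this
      rcases lt_trichotomy k l with hkl | rfl | hkl
      · obtain ⟨j, rfl⟩ := Nat.exists_eq_add_of_lt hkl
        refine hsib v c j hc.2.symm hc.1 ?_
        rw [← hk, ← Function.iterate_add_apply, ← hl, show j + 1 + k = k + j + 1 by omega]
      · exact hcv (hl.symm.trans hk)
      · obtain ⟨j, rfl⟩ := Nat.exists_eq_add_of_lt hkl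
        refine hsib c v j hc.2 hvr ?_
        rw [← hl, ← Function.iterate_add_apply, ← hk, show j + 1 + l = l + j + 1 by omega]
  exact funext fun v => hmin _ v rfl

end Tree

section Krylov

variable {n : ℕ}

/-- The observability matrix, with rows `e_rᵀ A ^ a` for `a < n`. -/
def obsMat {R : Type*} [CommRing R] (A : Matrix (Fin n) (Fin n) R) (r : Fin n) :
    Matrix (Fin n) (Fin n) R :=
  Matrix.of fun a v => (A ^ (a : ℕ)) r v

/-- The Krylov matrix, with columns `A ^ b x` for `b < n`. -/
def krylovMat {R : Type*} [CommRing R] (A : Matrix (Fin n) (Fin n) R) (x : Fin n → R) :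
    Matrix (Fin n) (Fin n) R :=
  Matrix.of fun v b => (A ^ (b : ℕ) *ᵥ x) v

theorem hankel_eq_obsMat_mul_krylovMat {R : Type*} [CommRing R] (A : Matrix (Fin n) (Fin n) R)
    (x : Fin n → R) (r : Fin n) :
    (Matrix.of fun a b : Fin n => (A ^ ((a : ℕ) + (b : ℕ)) *ᵥ x) r) =
      obsMat A r * krylovMat A x := by
  ext a b
  rw [Matrix.of_apply, pow_add, ← mulVec_mulVec]
  rfl

theorem obsMat_map {R S : Type*} [CommRing R] [CommRing S] (f : R →+* S)
    (A : Matrix (Fin n) (Fin n) R) (r : Fin n) :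
    (obsMat A r).map f = obsMat (A.map f) r := by
  ext a v
  simp only [obsMat, Matrix.map_apply, Matrix.of_apply, ← Matrix.map_pow]

theorem krylovMat_map {R S : Type*} [CommRing R] [CommRing S] (f : R →+* S)
    (A : Matrix (Fin n) (Fin n) R) (x : Fin n → R) :
    (krylovMat A x).map f = krylovMat (A.map f) (f ∘ x) := by
  ext v b
  simp only [krylovMat, Matrix.map_apply, Matrix.of_apply, ← Matrix.map_pow,
    RingHom.map_mulVec]

theorem krylovMat_single {R : Type*} [CommRing R] (A : Matrix (Fin n) (Fin n) R) (s : Fin n) :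
    krylovMat A (Pi.single s 1) = (obsMat Aᵀ s)ᵀ := by
  ext v b
  simp [krylovMat, obsMat, ← Matrix.transpose_pow]

variable {K : Type*} [Field K]

theorem pow_mulVec_apply_eq_zero {A : Matrix (Fin n) (Fin n) K} {r : Fin n} {w : Fin n → K}
    (h : obsMat A r *ᵥ w = 0) (k : ℕ) : (A ^ k *ᵥ w) r = 0 := by
  have hn : 0 < n := Fin.pos r
  have hdeg : (Polynomial.X ^ k %ₘ A.charpoly).natDegree < n := by
    have h1 : A.charpoly ≠ 1 := by
      intro h1
      have := A.charpoly_natDegree_eq_dim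
      rw [h1, Polynomial.natDegree_one, Fintype.card_fin] at this
      omega
    simpa using Polynomial.natDegree_modByMonic_lt (Polynomial.X ^ k) A.charpoly_monic h1
  rw [A.pow_eq_aeval_mod_charpoly, Polynomial.aeval_eq_sum_range' hdeg, Matrix.sum_mulVec,
    Finset.sum_apply]
  refine Finset.sum_eq_zero fun i hi => ?_
  have hi' : (A ^ i *ᵥ w) r = 0 := congrFun h ⟨i, Finset.mem_range.1 hi⟩
  rw [Matrix.smul_mulVec, Pi.smul_apply, hi', smul_zero]

/-- If no eigenvector of `A` vanishes at `r`, then the observability matrix is nonsingular. -/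
theorem det_obsMat_ne_zero [IsAlgClosed K] {A : Matrix (Fin n) (Fin n) K} {r : Fin n}
    (h : ∀ (w : Fin n → K) (μ : K), A *ᵥ w = μ • w → w r = 0 → w = 0) :
    (obsMat A r).det ≠ 0 := by
  intro hdet
  obtain ⟨w, hw0, hw⟩ := Matrix.exists_mulVec_eq_zero_iff.2 hdet
  let N : Submodule K (Fin n → K) := LinearMap.ker (obsMat A r).mulVecLin
  have hinv : ∀ v ∈ N, A.mulVecLin v ∈ N := by
    intro v hv
    simp only [N, LinearMap.mem_ker, Matrix.mulVecLin_apply] at hv ⊢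
    ext a
    have := pow_mulVec_apply_eq_zero hv (a + 1)
    rwa [pow_succ, ← mulVec_mulVec] at this
  have : Nontrivial N := ⟨⟨⟨w, hw⟩, 0, fun h => hw0 (congrArg Subtype.val h)⟩⟩
  obtain ⟨μ, hμ⟩ := Module.End.exists_eigenvalue (A.mulVecLin.restrict hinv)
  obtain ⟨v, hv⟩ := hμ.exists_hasEigenvector
  refine hv.2 (Subtype.ext (h v μ (congrArg Subtype.val hv.apply_eq_smul) ?_))
  simpa using pow_mulVec_apply_eq_zero (r := r) v.2 0

end Krylov

section Generic

variable {n : ℕ}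

theorem exists_det_obsMat_ne_zero {K : Type*} [Field K] [IsAlgClosed K]
    (E : Fin n → Fin n → Prop) (hloop : ∀ v, E v v) (r : Fin n)
    (hconn : ∀ v, Relation.ReflTransGen E v r) :
    ∃ A : Matrix (Fin n) (Fin n) K, (∀ u v, ¬ E v u → A u v = 0) ∧ (obsMat A r).det ≠ 0 := by
  obtain ⟨p, depth, hpr, hp⟩ := exists_parent_depth E r hconn
  have : Infinite K := IsAlgClosed.instInfinite
  let d : Fin n → K := fun i => Infinite.natEmbedding K i
  have hd : Function.Injective d := (Infinite.natEmbedding K).injective.comp Fin.val_injective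
  refine ⟨treeMat p r d, fun u v huv => ?_, det_obsMat_ne_zero fun w μ hw hr =>
    treeMat_eigenvector_eq_zero hpr (fun v hv => (hp v hv).2) hd hw hr⟩
  have h1 : u ≠ v := by rintro rfl; exact huv (hloop u)
  have h2 : ¬ (v ≠ r ∧ p v = u) := by rintro ⟨hv, rfl⟩; exact huv (hp v hv).1
  simp [treeMat, h1, h2]

variable (E : Fin n → Fin n → Prop) [DecidableRel E]

theorem exists_graphMat_eq {K : Type*} [Field K] (A : Matrix (Fin n) (Fin n) K)
    (hA : ∀ u v, ¬ E v u → A u v = 0) : ∃ w, graphMat E w = A := by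
  refine ⟨fun p => A p.1.2 p.1.1, ?_⟩
  ext u v
  by_cases h : E v u <;> simp [graphMat, h, hA]

open MvPolynomial

variable (F : Type*) [Field F]

/-- The matrix of the graph `E` whose edge weights are indeterminates. -/
noncomputable def genMat :
    Matrix (Fin n) (Fin n) (MvPolynomial ({p : Fin n × Fin n // E p.1 p.2} ⊕ Fin n) F) :=
  Matrix.of fun u v => if h : E v u then X (Sum.inl ⟨(v, u), h⟩) else 0

/-- The vector whose entries are indeterminates. -/
noncomputable def genVec :
    Fin n → MvPolynomial ({p : Fin n × Fin n // E p.1 p.2} ⊕ Fin n) F :=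
  fun i => X (Sum.inr i)

/-- The product of the determinants of the generic Krylov matrix and of all the generic
observability matrices. -/
noncomputable def genDet : MvPolynomial ({p : Fin n × Fin n // E p.1 p.2} ⊕ Fin n) F :=
  (krylovMat (genMat E F) (genVec E F)).det * ∏ r, (obsMat (genMat E F) r).det

variable {F} {K : Type*} [Field K] [Algebra F K]

theorem genMat_map_aeval (w : {p : Fin n × Fin n // E p.1 p.2} → K) (x : Fin n → K) :
    (genMat E F).map (aeval (R := F) (Sum.elim w x)).toRingHom = graphMat E w := by
  ext u v
  by_cases h : E v u <;> simp [genMat, graphMat, h]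

theorem aeval_det_obsMat (w : {p : Fin n × Fin n // E p.1 p.2} → K) (x : Fin n → K)
    (r : Fin n) :
    aeval (R := F) (Sum.elim w x) (obsMat (genMat E F) r).det = (obsMat (graphMat E w) r).det := by
  rw [← genMat_map_aeval (F := F) E w x, ← obsMat_map]
  exact RingHom.map_det _ _

theorem aeval_det_krylovMat (w : {p : Fin n × Fin n // E p.1 p.2} → K) (x : Fin n → K) :
    aeval (R := F) (Sum.elim w x) (krylovMat (genMat E F) (genVec E F)).det =
      (krylovMat (graphMat E w) x).det := by
  have hx : (aeval (R := F) (Sum.elim w x)).toRingHom ∘ genVec E F = x := by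
    ext i; simp [genVec]
  have hmap := krylovMat_map (aeval (R := F) (Sum.elim w x)).toRingHom (genMat E F) (genVec E F)
  rw [hx, genMat_map_aeval] at hmap
  rw [← hmap]
  exact RingHom.map_det _ _

variable (F) in
theorem genDet_ne_zero (hconn : ∀ u v, Relation.ReflTransGen E u v) (hloop : ∀ v, E v v) :
    genDet E F ≠ 0 := by
  refine mul_ne_zero ?_ (Finset.prod_ne_zero_iff.2 fun r _ => ?_)
  · rcases isEmpty_or_nonempty (Fin n) with _ | ⟨⟨s⟩⟩
    · simp
    · obtain ⟨A, hA, hdet⟩ := exists_det_obsMat_ne_zero (K := AlgebraicClosure F)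
        (Function.swap E) hloop s fun v => Relation.reflTransGen_swap.2 (hconn s v)
      obtain ⟨w, hw⟩ := exists_graphMat_eq E Aᵀ fun u v h => hA v u h
      intro h0
      have := aeval_det_krylovMat (F := F) E w (Pi.single s 1)
      rw [h0, map_zero, hw, krylovMat_single, det_transpose, transpose_transpose] at this
      exact hdet this.symm
  · obtain ⟨A, hA, hdet⟩ := exists_det_obsMat_ne_zero (K := AlgebraicClosure F) E hloop r
      fun v => hconn v r
    obtain ⟨w, hw⟩ := exists_graphMat_eq E A hA
    intro h0
    have := aeval_det_obsMat (F := F) E w 0 r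
    rw [h0, map_zero, hw] at this
    exact hdet this.symm

theorem totalDegree_det_le {σ R ι : Type*} [CommRing R] [Fintype ι] [DecidableEq ι]
    (M : Matrix ι ι (MvPolynomial σ R)) (c : ι → ℕ) (h : ∀ i j, (M i j).totalDegree ≤ c j) :
    M.det.totalDegree ≤ ∑ j, c j := by
  rw [Matrix.det_apply]
  refine totalDegree_finsetSum_le fun τ _ => ?_
  rw [Units.smul_def]
  refine (totalDegree_smul_le _ _).trans ((totalDegree_finsetProd _ _).trans ?_)
  exact Finset.sum_le_sum fun i _ => h _ _

variable (F)

theorem totalDegree_genMat_pow_le (k : ℕ) (u v : Fin n) :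
    ((genMat E F ^ k) u v).totalDegree ≤ k := by
  induction k generalizing u v with
  | zero => by_cases h : u = v <;> simp [h]
  | succ k ih =>
    rw [pow_succ, Matrix.mul_apply]
    refine totalDegree_finsetSum_le fun i _ => (totalDegree_mul _ _).trans ?_
    refine add_le_add (ih u i) ?_
    by_cases h : E v i <;> simp [genMat, h]

theorem two_mul_totalDegree_genDet_le : 2 * (genDet E F).totalDegree ≤ n ^ 3 + n := by
  have hsum : 2 * ∑ a : Fin n, (a : ℕ) = n * (n - 1) := by
    rw [Fin.sum_univ_eq_sum_range (fun i => i) n, mul_comm, Finset.sum_range_id_mul_two]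
  have hobs : ∀ r, (obsMat (genMat E F) r).det.totalDegree ≤ ∑ a : Fin n, (a : ℕ) := fun r => by
    rw [← det_transpose]
    exact totalDegree_det_le _ _ fun v a => totalDegree_genMat_pow_le E F a r v
  have hkry : (krylovMat (genMat E F) (genVec E F)).det.totalDegree ≤
      ∑ b : Fin n, ((b : ℕ) + 1) := by
    refine totalDegree_det_le _ _ fun v b => ?_
    rw [krylovMat, Matrix.of_apply, mulVec, dotProduct]
    refine totalDegree_finsetSum_le fun i _ => (totalDegree_mul _ _).trans ?_
    exact add_le_add (totalDegree_genMat_pow_le E F b v i) (by simp [genVec])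
  have hprod : (∏ r, (obsMat (genMat E F) r).det).totalDegree ≤ n * ∑ a : Fin n, (a : ℕ) := by
    refine (totalDegree_finsetProd _ _).trans ((Finset.sum_le_sum fun r _ => hobs r).trans ?_)
    simp
  have hmul := totalDegree_mul (krylovMat (genMat E F) (genVec E F)).det
    (∏ r, (obsMat (genMat E F) r).det)
  rw [Finset.sum_add_distrib, Finset.sum_const, Finset.card_univ, Fintype.card_fin,
    smul_eq_mul, mul_one] at hkry
  have hbound : 2 * (genDet E F).totalDegree ≤
      n * (n - 1) + 2 * n + n * (n * (n - 1)) := by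
    rw [← hsum]
    unfold genDet
    linarith
  refine hbound.trans ?_
  rcases n with _ | m
  · simp
  · rw [Nat.add_sub_cancel]
    apply le_of_eq
    ring

/-- The Schwartz-Zippel bound for the number of zeros over a finite field, for an arbitrary
finite type of variables. -/
theorem card_zeros_mul_card_le {σ F : Type*} [Fintype σ] [DecidableEq σ] [Field F] [Fintype F]
    [DecidableEq F] {P : MvPolynomial σ F} (hP : P ≠ 0) :
    (Finset.univ.filter fun f : σ → F => eval f P = 0).card * Fintype.card F ≤
      P.totalDegree * Fintype.card (σ → F) := by
  let e := Fintype.equivFin σ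
  have hP' : rename e P ≠ 0 := fun h =>
    hP (rename_injective e e.injective (h.trans (map_zero _).symm))
  have hsz := schwartz_zippel_totalDegree hP' (Finset.univ : Finset F)
  have hcard : (Finset.univ.filter fun f : σ → F => eval f P = 0).card =
      ((Fintype.piFinset fun _ => (Finset.univ : Finset F)).filter
        fun f => eval f (rename e P) = 0).card := by
    refine Finset.card_equiv (e.arrowCongr (Equiv.refl F)) fun f => ?_
    have : (e.arrowCongr (Equiv.refl F) f) ∘ e = f := by ext; simp
    simp [eval_rename, this]
  have hq : (0 : ℚ≥0) < Fintype.card F := by exact_mod_cast Fintype.card_pos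
  rw [← hcard, Finset.card_univ, div_le_div_iff₀ (pow_pos hq _) hq] at hsz
  have hdeg : (rename e P).totalDegree ≤ P.totalDegree := totalDegree_rename_le _ _
  rw [Fintype.card_fun]
  have hsz' : (Finset.univ.filter fun f : σ → F => eval f P = 0).card * Fintype.card F ≤
      (rename e P).totalDegree * Fintype.card F ^ Fintype.card σ := by exact_mod_cast hsz
  exact hsz'.trans (Nat.mul_le_mul_right _ hdeg)

end Generic

/-- For a strongly connected digraph with self-loops on `n` vertices, over a finite field
with `q ≥ (n³+n)/2` elements, if the edge weights of `A` and the entries of `x` are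
i.i.d. uniform, then the probability (fraction of outcomes) that all the `n × n` Hankel
matrices `H_n^(r)`, `r = 1, …, n`, are simultaneously invertible is at least
`1 - (n³+n)/(2q)`. -/
theorem hankel_all_invertible_prob {n : ℕ} {F : Type*} [Field F] [Fintype F] [DecidableEq F]
    (E : Fin n → Fin n → Prop) [DecidableRel E]
    (hconn : ∀ u v : Fin n, Relation.ReflTransGen E u v)
    (hloop : ∀ v : Fin n, E v v)
    (hq : n ^ 3 + n ≤ 2 * Fintype.card F) :
    1 - ((n : ℝ) ^ 3 + n) / (2 * Fintype.card F) ≤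
      ((Finset.univ.filter fun ω : ({p : Fin n × Fin n // E p.1 p.2} → F) × (Fin n → F) =>
          ∀ r : Fin n, (Matrix.det (Matrix.of fun a b : Fin n =>
            ((graphMat E ω.1 ^ ((a : ℕ) + (b : ℕ))) *ᵥ ω.2) r)) ≠ 0).card : ℝ)
        / Fintype.card (({p : Fin n × Fin n // E p.1 p.2} → F) × (Fin n → F)) := by
  classical
  let Q : Type _ := {p : Fin n × Fin n // E p.1 p.2}
  let Bad : Finset ((Q ⊕ Fin n) → F) :=
    Finset.univ.filter fun f => MvPolynomial.eval f (genDet E F) = 0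
  let Good : Finset ((Q → F) × (Fin n → F)) := Finset.univ.filter fun ω =>
    ∀ r : Fin n, (Matrix.det (Matrix.of fun a b : Fin n =>
      ((graphMat E ω.1 ^ ((a : ℕ) + (b : ℕ))) *ᵥ ω.2) r)) ≠ 0
  have hbad : Bad.card * Fintype.card F ≤
      (genDet E F).totalDegree * Fintype.card ((Q ⊕ Fin n) → F) :=
    card_zeros_mul_card_le (genDet_ne_zero E F hconn hloop)
  have hdeg := two_mul_totalDegree_genDet_le E F
  have hcompl : Goodᶜ.card ≤ Bad.card := by
    refine Finset.card_le_card_of_injOn (Equiv.sumArrowEquivProdArrow Q (Fin n) F).symm ?_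
      (Equiv.injective _).injOn
    rintro ⟨w, x⟩ hω
    simp only [Good, Finset.coe_compl, Set.mem_compl_iff, Finset.mem_coe, Finset.mem_filter,
      Finset.mem_univ, true_and, not_forall, not_not] at hω
    obtain ⟨r, hr⟩ := hω
    rw [hankel_eq_obsMat_mul_krylovMat, det_mul] at hr
    have hobs := aeval_det_obsMat (F := F) E w x r
    have hkry := aeval_det_krylovMat (F := F) E w x
    have hzero : MvPolynomial.aeval (Sum.elim w x) (genDet E F) = 0 := by
      rw [genDet, map_mul, map_prod]
      rcases mul_eq_zero.1 hr with h | h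
      · rw [Finset.prod_eq_zero (Finset.mem_univ r) (hobs.trans h), mul_zero]
      · rw [hkry, h, zero_mul]
    rw [MvPolynomial.aeval_eq_eval] at hzero
    exact Finset.mem_coe.2 (Finset.mem_filter.2 ⟨Finset.mem_univ _, hzero⟩)
  have hcard : Fintype.card ((Q ⊕ Fin n) → F) = Fintype.card ((Q → F) × (Fin n → F)) :=
    Fintype.card_congr (Equiv.sumArrowEquivProdArrow Q (Fin n) F)
  have hsum : Good.card + Goodᶜ.card = Fintype.card ((Q → F) × (Fin n → F)) :=
    Finset.card_add_card_compl Good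
  rw [hcard] at hbad
  have hN : 0 < Fintype.card ((Q → F) × (Fin n → F)) := Fintype.card_pos
  have hF : 0 < Fintype.card F := Fintype.card_pos
  change _ ≤ (Good.card : ℝ) / (Fintype.card ((Q → F) × (Fin n → F)) : ℝ)
  generalize Fintype.card ((Q → F) × (Fin n → F)) = N at *
  generalize Fintype.card F = q at *
  have hmain : 2 * (Goodᶜ.card * q) ≤ (n ^ 3 + n) * N :=
    calc 2 * (Goodᶜ.card * q) ≤ 2 * ((genDet E F).totalDegree * N) :=
          Nat.mul_le_mul_left _ ((Nat.mul_le_mul_right _ hcompl).trans hbad)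
      _ = 2 * (genDet E F).totalDegree * N := (mul_assoc _ _ _).symm
      _ ≤ (n ^ 3 + n) * N := Nat.mul_le_mul_right _ hdeg
  have hmain' : 2 * ((Goodᶜ.card : ℝ) * q) ≤ ((n : ℝ) ^ 3 + n) * N := by exact_mod_cast hmain
  have hsum' : (Good.card : ℝ) + Goodᶜ.card = N := by exact_mod_cast hsum
  have hN' : (0 : ℝ) < N := by exact_mod_cast hN
  have hF' : (0 : ℝ) < q := by exact_mod_cast hF
  rw [sub_le_iff_le_add, div_add_div _ _ hN'.ne' (by positivity), one_le_div (by positivity)]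
  rw [← eq_sub_iff_add_eq] at hsum'
  rw [hsum']
  linarith
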